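/- arXiv:math/9904042 — 2 statements merged into one kernel-verified Lean document; each statement's English description precedes it below -/
import Mathlib

section
/- For all integers k ≥ 1, n ≥ 1 and every real t, the exponential generating function of the distribution of the longest weakly increasing subsequence satisfies ∑_{N=0}^∞ F_I(n;k,N)·(k t)^N / N! = det( (a_{i−j}(t))_{1≤i,j≤n} ), i.e. G_I(n;k,kt) equals the n×n Toeplitz determinant with symbol f_I(z;t) = e^{t/z}(1+z)^k. -/
open scoped BigOperators

/-- The length of the longest weakly increasing subsequence of the word `w`. -/
noncomputable def incLen {N k : ℕ} (w : Fin N → Fin k) : ℕ :=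
  sSup {m | ∃ f : Fin m → Fin N, StrictMono f ∧ Monotone (w ∘ f)}

/-- `F_I(n;k,N)`: the probability that a uniform random word of length `N` on `k`
letters has longest weakly increasing subsequence of length at most `n`. -/
noncomputable def FI (n k N : ℕ) : ℝ :=
  (Nat.card {w : Fin N → Fin k // incLen w ≤ n} : ℝ) / (k : ℝ) ^ N

/-- The Fourier coefficients `a_j(t)` of the symbol `e^{t/z} (1+z)^k`. -/
noncomputable def aCoeff (k : ℕ) (j : ℤ) (t : ℝ) : ℝ :=
  ∑' ℓ : ℕ, t ^ ℓ / (Nat.factorial ℓ : ℝ) *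
    (if 0 ≤ j + (ℓ : ℤ) then (Nat.choose k (j + (ℓ : ℤ)).toNat : ℝ) else 0)

/-!
Deal the word by patience sorting: each letter replaces the top of the first pile whose top exceeds
it, an empty pile having top `k`. The word fits on `n` piles if and only if it has no weakly
increasing subsequence of more than `n` letters. A letter `a` lands on pile `j` exactly when
`max_{i < j} y i ≤ a < y j`, so the number `c_N(y)` of words of length `N` that fit on piles with
weakly increasing tops `y` satisfies
`c_{N+1}(y) = ∑_j ∑_a c_N(y with y j replaced by a)`.

Let `D(y)` be the determinant with entries `a_{i-j}(t)`, where column `j` uses the symbol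
`e^{t/z} (1 + z)^{y j}`. Differentiating column `j` raises its index by one. By Pascal's rule the
result, as a function of the top of pile `j`, has the determinants with `y j` replaced by `a` as its
differences, and it vanishes at `max_{i < j} y i`, where column `j` is zero or equals the previous
one. Hence `D(y)' = ∑_j ∑_a D(y with y j replaced by a)`. As `D(y)` is `1` at `t = 0`, it is the
exponential generating function of `c_N(y)`.
-/

open Finset Function Polynomial
open scoped Nat List

section FirstPile

variable {α ι : Type*} [LinearOrder α] [LinearOrder ι] {y : ι → α} {a : α} {j : ι}

lemma update_monotone_of_isLeast (hy : Monotone y) (hj : IsLeast {i | a < y i} j) :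
    Monotone (update y j a) := by
  have le_of_lt_pile {i : ι} (hi : i < j) : y i ≤ a := not_lt.1 fun hai ↦ hi.not_ge (hj.2 hai)
  intro p q hpq
  rcases eq_or_ne p j with rfl | hp
  · rcases eq_or_ne q p with rfl | hq
    · rfl
    · simpa [hq] using (le_of_lt hj.1).trans (hy hpq)
  · rcases eq_or_ne q j with rfl | hq
    · simpa [hp] using le_of_lt_pile (hpq.lt_of_ne hp)
    · simpa [hp, hq] using hy hpq

lemma isLeast_setOf_lt_iff_mem_Ico [OrderBot α] [LocallyFiniteOrder α] [LocallyFiniteOrderBot ι] :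
    IsLeast {i | a < y i} j ↔ a ∈ Ico ((Iio j).sup y) (y j) := by
  simp only [IsLeast, mem_lowerBounds, Set.mem_ofPred_eq, mem_Ico, Finset.sup_le_iff, mem_Iio]
  grind

end FirstPile

section PatienceSorting

variable {α ι : Type*} [LinearOrder α] [Fintype ι]

/-- In patience sorting, each letter `a` of a word goes on top of the first pile whose top exceeds
`a`. For piles with weakly increasing tops `y`, this expresses that the whole word `w` can be dealt,
an empty pile having a top that exceeds all letters. It is encoded through the weakly
increasing subsequences of `w`, a subsequence starting with `b` being preceded by one letter from
each pile whose top is at most `b`. -/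
def FitsPiles (y : ι → α) (w : List α) : Prop :=
  ∀ b s, b :: s <+ w → (b :: s).SortedLE → #{i | y i ≤ b} + (s.length + 1) ≤ Fintype.card ι

lemma fitsPiles_nil (y : ι → α) : FitsPiles y [] := by
  simp [FitsPiles]

lemma fitsPiles_const_iff {c : α} {w : List α} (hw : ∀ a ∈ w, a < c) :
    FitsPiles (fun _ : ι ↦ c) w ↔ ∀ s, s <+ w → s.SortedLE → s.length ≤ Fintype.card ι := by
  have not_le_head {b : α} {s : List α} (hs : b :: s <+ w) : ¬ c ≤ b :=
    (hw b (hs.subset List.mem_cons_self)).not_ge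
  constructor
  · rintro h (_ | ⟨b, s⟩) hs hsorted
    · exact Nat.zero_le _
    · simpa [not_le_head hs] using h b s hs hsorted
  · intro h b s hs hsorted
    simpa [not_le_head hs] using h (b :: s) hs hsorted

variable {y : ι → α} {a b : α} {j : ι}

lemma card_filter_le_lt_card (ha : a < y j) : #{i | y i ≤ a} < Fintype.card ι :=
  card_lt_univ_of_notMem (x := j) (by simpa using ha)

variable [LinearOrder ι]

lemma FitsPiles.exists_isLeast {w : List α} (h : FitsPiles y (a :: w)) :
    ∃ j, IsLeast {i | a < y i} j := by
  have hcard : #{i | y i ≤ a} < #(univ : Finset ι) := by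
    simpa [List.sortedLE_iff_pairwise] using h a []
  obtain ⟨i, -, hi⟩ := exists_mem_notMem_of_card_lt_card hcard
  have hne : ({i | a < y i} : Finset ι).Nonempty := ⟨i, by simpa using hi⟩
  exact ⟨_, by simpa using isLeast_min' _ hne⟩

lemma card_filter_update_le_of_lt (ha : a < y j) (hba : b < a) :
    #{i | update y j a i ≤ b} = #{i | y i ≤ b} := by
  congr 1 with i
  rcases eq_or_ne i j with rfl | hij
  · simp [hba.not_ge, (hba.trans ha).not_ge]
  · simp [hij]

lemma card_filter_update_le_of_le (hy : Monotone y) (hj : IsLeast {i | a < y i} j) (hab : a ≤ b) :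
    #{i | update y j a i ≤ b} = max #{i | y i ≤ b} (#{i | y i ≤ a} + 1) := by
  have ha : a < y j := hj.1
  have insert_eq : univ.filter (update y j a · ≤ b) = insert j (univ.filter (y · ≤ b)) := by
    ext i
    rcases eq_or_ne i j with rfl | hij <;> simp [*]
  have card_insert_eq : #(insert j (univ.filter (y · ≤ a))) = #{i | y i ≤ a} + 1 :=
    card_insert_of_notMem (by simpa using ha)
  rw [insert_eq, ← card_insert_eq]
  rcases le_or_gt (y j) b with hjb | hbj
  · have hsub : insert j (univ.filter (y · ≤ a)) ⊆ univ.filter (y · ≤ b) := by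
      grind
    rw [insert_eq_of_mem (by simpa using hjb), max_eq_left (card_le_card hsub)]
  · have filter_eq : univ.filter (y · ≤ b) = univ.filter (y · ≤ a) := by
      ext i
      suffices y i ≤ b → y i ≤ a by simpa using ⟨this, (·.trans hab)⟩
      intro hib
      by_contra! hai
      exact (hbj.trans_le (hy (hj.2 hai))).not_ge hib
    rw [filter_eq, max_eq_right (card_le_card (subset_insert _ _))]

lemma fitsPiles_cons_iff_update (hy : Monotone y) (hj : IsLeast {i | a < y i} j) (w : List α) :
    FitsPiles y (a :: w) ↔ FitsPiles (update y j a) w := by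
  have ha : a < y j := hj.1
  constructor
  · intro h b s hs hsorted
    have hb := h b s (hs.cons a) hsorted
    rcases lt_or_ge b a with hba | hab
    · rwa [card_filter_update_le_of_lt ha hba]
    · have hab' := h a (b :: s) (hs.cons_cons a)
        (List.isChain_cons_cons.2 ⟨hab, hsorted.isChain⟩).sortedLE
      rw [List.length_cons] at hab'
      rw [card_filter_update_le_of_le hy hj hab]
      omega
  · intro h b s hs hsorted
    rcases List.sublist_cons_iff.1 hs with hs | ⟨r, hbr, hs⟩
    · refine le_trans (Nat.add_le_add_right ?_ _) (h b s hs hsorted)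
      rcases lt_or_ge b a with hba | hab
      · exact (card_filter_update_le_of_lt ha hba).ge
      · exact card_filter_update_le_of_le hy hj hab ▸ le_max_left _ _
    · obtain ⟨rfl, rfl⟩ := List.cons_eq_cons.1 hbr
      rcases s with _ | ⟨c, s⟩
      · exact card_filter_le_lt_card ha
      · obtain ⟨hbc, hchain⟩ := List.isChain_cons_cons.1 hsorted.isChain
        have hc := h c s hs hchain.sortedLE
        rw [card_filter_update_le_of_le hy hj hbc] at hc
        rw [List.length_cons]
        omega

end PatienceSorting

section LongestIncreasing

lemma exists_strictMono_monotone_comp_iff {α : Type*} [Preorder α] {N m : ℕ} (w : Fin N → α) :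
    (∃ f : Fin m → Fin N, StrictMono f ∧ Monotone (w ∘ f)) ↔
      ∃ s, s <+ List.ofFn w ∧ s.SortedLE ∧ s.length = m := by
  constructor
  · rintro ⟨f, hf, hmono⟩
    have hg : StrictMono (Fin.cast (List.length_ofFn (f := w)).symm ∘ f ∘
        Fin.cast (List.length_ofFn (f := w ∘ f))) :=
      fun _ _ h ↦ hf h
    refine ⟨List.ofFn (w ∘ f), ?_, List.sortedLE_ofFn_iff.2 hmono, List.length_ofFn⟩
    refine List.sublist_iff_exists_fin_orderEmbedding_get_eq.2 ⟨.ofStrictMono _ hg, fun i ↦ ?_⟩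
    simp only [List.get_ofFn]
    rfl
  · rintro ⟨s, hs, hsorted, rfl⟩
    obtain ⟨e, he⟩ := List.sublist_iff_exists_fin_orderEmbedding_get_eq.1 hs
    have get_eq : s.get = w ∘ Fin.cast List.length_ofFn ∘ e := by
      ext i
      simp only [he, List.get_ofFn, comp_apply]
    exact ⟨Fin.cast List.length_ofFn ∘ e, e.strictMono, get_eq ▸ hsorted.monotone_get⟩

lemma incLen_le_iff {N k n : ℕ} (w : Fin N → Fin k) :
    incLen w ≤ n ↔ ∀ s, s <+ List.ofFn w → s.SortedLE → s.length ≤ n := by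
  simp only [incLen, exists_strictMono_monotone_comp_iff]
  rw [csSup_le_iff]
  · grind
  · refine ⟨N, ?_⟩
    rintro _ ⟨s, hs, -, rfl⟩
    simpa using hs.length_le
  · exact ⟨0, [], by simp [List.sortedLE_iff_pairwise]⟩

lemma incLen_le_card_iff_fitsPiles {N k : ℕ} {ι : Type*} [Fintype ι] (w : Fin N → Fin k) :
    incLen w ≤ Fintype.card ι ↔ FitsPiles (fun _ : ι ↦ k) ((List.ofFn w).map Fin.val) := by
  have sortedLE_map {s : List (Fin k)} : (s.map Fin.val).SortedLE ↔ s.SortedLE := by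
    simp [List.sortedLE_iff_pairwise, List.pairwise_map]
  rw [incLen_le_iff, fitsPiles_const_iff (by simp)]
  constructor
  · intro h _ hs hsorted
    obtain ⟨s, hs', rfl⟩ := List.sublist_map_iff.1 hs
    simpa using h s hs' (sortedLE_map.1 hsorted)
  · intro h s hs hsorted
    simpa using h _ (hs.map _) (sortedLE_map.2 hsorted)

end LongestIncreasing

section Counting

lemma card_subtype_eq_sum_card_cons {β : Type*} [Fintype β] {N : ℕ}
    (P : (Fin (N + 1) → β) → Prop) :
    Nat.card {w // P w} = ∑ b, Nat.card {w // P (Fin.cons b w)} := by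
  rw [← Nat.card_sigma]
  exact Nat.card_congr <| ((Fin.consEquiv fun _ ↦ β).subtypeEquivOfSubtype.symm).trans
    (Equiv.subtypeProdEquivSigmaSubtype fun b w ↦ P (Fin.cons b w))

variable {ι : Type*} [Fintype ι]

/-- The number of words of length `N` on the letters `0, …, k - 1` that can be dealt onto piles with
tops `y`. A pile whose top is `k` plays the role of an empty pile. -/
noncomputable def fittingWordCount (k N : ℕ) (y : ι → ℕ) : ℕ :=
  Nat.card {w : Fin N → Fin k // FitsPiles y ((List.ofFn w).map Fin.val)}

lemma card_incLen_le_eq_fittingWordCount (n k N : ℕ) :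
    Nat.card {w : Fin N → Fin k // incLen w ≤ n} = fittingWordCount k N fun _ : Fin n ↦ k := by
  simp only [fittingWordCount, ← incLen_le_card_iff_fitsPiles, Fintype.card_fin]

lemma fittingWordCount_zero (k : ℕ) (y : ι → ℕ) : fittingWordCount k 0 y = 1 := by
  simp [fittingWordCount, fitsPiles_nil]

variable [LinearOrder ι] [LocallyFiniteOrderBot ι] {y : ι → ℕ}

lemma card_fitsPiles_cons (k N : ℕ) (hy : Monotone y) (a : ℕ) :
    Nat.card {w : Fin N → Fin k // FitsPiles y (a :: (List.ofFn w).map Fin.val)} =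
      ∑ j with a ∈ Ico ((Iio j).sup y) (y j), fittingWordCount k N (update y j a) := by
  by_cases hex : ∃ j, IsLeast {i | a < y i} j
  · obtain ⟨j, hj⟩ := hex
    have filter_eq : univ.filter (fun j ↦ a ∈ Ico ((Iio j).sup y) (y j)) = {j} := by
      ext i
      rw [mem_filter_univ, ← isLeast_setOf_lt_iff_mem_Ico, mem_singleton]
      exact ⟨fun hi ↦ hi.unique hj, fun hij ↦ hij ▸ hj⟩
    simp only [filter_eq, sum_singleton, fitsPiles_cons_iff_update hy hj, fittingWordCount]
  · have not_fits (w : List ℕ) : ¬ FitsPiles y (a :: w) := fun h ↦ hex h.exists_isLeast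
    simp only [not_exists, isLeast_setOf_lt_iff_mem_Ico] at hex
    rw [filter_false_of_mem fun j _ ↦ hex j]
    simp [not_fits]

lemma fittingWordCount_succ {k : ℕ} (N : ℕ) (hy : Monotone y) (hk : ∀ j, y j ≤ k) :
    fittingWordCount k (N + 1) y =
      ∑ j, ∑ a ∈ Ico ((Iio j).sup y) (y j), fittingWordCount k N (update y j a) := by
  calc fittingWordCount k (N + 1) y
    _ = ∑ a : Fin k, ∑ j with (a : ℕ) ∈ Ico ((Iio j).sup y) (y j),
          fittingWordCount k N (update y j a) := by
      rw [fittingWordCount, card_subtype_eq_sum_card_cons]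
      simp only [List.ofFn_cons, List.map_cons, card_fitsPiles_cons k N hy]
    _ = ∑ j, ∑ a ∈ range k with a ∈ Ico ((Iio j).sup y) (y j),
          fittingWordCount k N (update y j a) := by
      simp only [sum_filter]
      rw [sum_comm]
      exact sum_congr rfl fun j _ ↦ Fin.sum_univ_eq_sum_range (fun a ↦
        if a ∈ Ico ((Iio j).sup y) (y j) then
          fittingWordCount k N (update y j a) else 0) k
    _ = _ := by
      refine sum_congr rfl fun j _ ↦ sum_congr ?_ fun _ _ ↦ rfl
      grind

end Counting

section SymbolCoefficients

/-- The binomial coefficient `C(p, m)` for an integer `m`, which is `0` for `m < 0`. -/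
def intChoose (p : ℕ) (m : ℤ) : ℕ :=
  if 0 ≤ m then p.choose m.toNat else 0

lemma intChoose_of_neg (p : ℕ) {m : ℤ} (hm : m < 0) : intChoose p m = 0 :=
  if_neg hm.not_ge

lemma intChoose_of_lt {p : ℕ} {m : ℤ} (hm : (p : ℤ) < m) : intChoose p m = 0 := by
  rw [intChoose, if_pos (by omega), Nat.choose_eq_zero_of_lt (by omega)]

lemma intChoose_zero_right (p : ℕ) : intChoose p 0 = 1 := by
  simp [intChoose]

lemma intChoose_succ_succ (p : ℕ) (m : ℤ) :
    intChoose (p + 1) (m + 1) = intChoose p m + intChoose p (m + 1) := by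
  rcases lt_trichotomy m (-1) with hm | rfl | hm
  · rw [intChoose_of_neg _ (by omega), intChoose_of_neg _ (by omega), intChoose_of_neg _ (by omega)]
  · simp [intChoose]
  · lift m to ℕ using by omega
    simp only [intChoose]
    norm_cast

variable (K : Type*) [Field K]

/-- The Fourier coefficient `a_m` of the symbol `e^{t/z} (1 + z)^p`, as a polynomial in `t`. -/
noncomputable def symbolCoeff (p : ℕ) (m : ℤ) : K[X] :=
  ∑ l ∈ range ((p - m).toNat + 1), monomial l ((intChoose p (m + l) : K) / l !)

lemma intChoose_add_eq_zero_of_notMem {p l : ℕ} {m : ℤ} (hl : l ∉ range ((p - m).toNat + 1)) :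
    intChoose p (m + l) = 0 := by
  rw [mem_range] at hl
  exact intChoose_of_lt (by omega)

lemma coeff_symbolCoeff (p : ℕ) (m : ℤ) (l : ℕ) :
    (symbolCoeff K p m).coeff l = (intChoose p (m + l) : K) / l ! := by
  simp only [symbolCoeff, finsetSum_coeff, coeff_monomial, sum_ite_eq', ite_eq_left_iff]
  intro hl
  simp [intChoose_add_eq_zero_of_notMem hl]

lemma symbolCoeff_succ_succ (p : ℕ) (m : ℤ) :
    symbolCoeff K (p + 1) (m + 1) = symbolCoeff K p m + symbolCoeff K p (m + 1) := by
  ext l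
  simp only [coeff_add, coeff_symbolCoeff, add_right_comm m 1 (l : ℤ), intChoose_succ_succ,
    Nat.cast_add, add_div]

lemma symbolCoeff_zero_of_pos {m : ℤ} (hm : 0 < m) : symbolCoeff K 0 m = 0 := by
  ext l
  rw [coeff_symbolCoeff, intChoose_of_lt (by omega)]
  simp

lemma derivative_symbolCoeff [CharZero K] (p : ℕ) (m : ℤ) :
    derivative (symbolCoeff K p m) = symbolCoeff K p (m + 1) := by
  ext l
  rw [coeff_derivative, coeff_symbolCoeff, coeff_symbolCoeff, Nat.factorial_succ, Nat.cast_succ,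
    add_right_comm, ← add_assoc]
  have : (l : K) + 1 ≠ 0 := by exact_mod_cast l.succ_ne_zero
  have : (l ! : K) ≠ 0 := by exact_mod_cast l.factorial_ne_zero
  push_cast
  field_simp

lemma eval_symbolCoeff (p : ℕ) (m : ℤ) (t : ℝ) : (symbolCoeff ℝ p m).eval t = aCoeff p m t := by
  have term_eq (l : ℕ) : t ^ l / (l ! : ℝ) *
      (if 0 ≤ m + (l : ℤ) then (p.choose (m + (l : ℤ)).toNat : ℝ) else 0) =
        (intChoose p (m + l) : ℝ) / l ! * t ^ l := by
    rw [intChoose]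
    push_cast
    ring
  simp only [aCoeff, term_eq, symbolCoeff, eval_finsetSum, eval_monomial]
  refine (tsum_eq_sum fun l hl ↦ ?_).symm
  simp [intChoose_add_eq_zero_of_notMem hl]

end SymbolCoefficients

lemma derivative_det {R n : Type*} [CommRing R] [Fintype n] [DecidableEq n]
    (M : Matrix n n R[X]) :
    derivative M.det = ∑ j, (M.updateCol j fun i ↦ derivative (M i j)).det := by
  simp only [Matrix.det_apply', derivative_sum, derivative_intCast_mul, derivative_prod_finset,
    mul_sum]
  rw [sum_comm]
  refine sum_congr rfl fun j _ ↦ sum_congr rfl fun σ _ ↦ ?_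
  rw [← prod_erase_mul _ _ (mem_univ j), Matrix.updateCol_self]
  congr 2
  exact prod_congr rfl fun i hi ↦ by rw [Matrix.updateCol_ne (ne_of_mem_erase hi)]

lemma sup_Iio_succ {α : Type*} [SemilatticeSup α] [OrderBot α] {n : ℕ}
    {y : Fin (n + 1) → α} (hy : Monotone y) (p : Fin n) :
    (Iio p.succ).sup y = y p.castSucc :=
  le_antisymm
    (Finset.sup_le fun _ hi ↦ hy (Fin.le_castSucc_iff.2 (mem_Iio.1 hi)))
    (Finset.le_sup (mem_Iio.2 p.castSucc_lt_succ))

section PileMatrix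

variable (K : Type*) [Field K] {n : ℕ}

/-- The matrix with entries `a_{i - j}`, those in column `j` being taken for the symbol
`e^{t/z} (1 + z)^{y j}`. It is Toeplitz when `y` is constant, and for weakly increasing `y` its
determinant is the exponential generating function of the words that can be dealt onto piles with
tops `y`. -/
noncomputable def pileMatrix (y : Fin n → ℕ) : Matrix (Fin n) (Fin n) K[X] :=
  .of fun i j ↦ symbolCoeff K (y j) ((i : ℤ) - j)

lemma pileMatrix_update (y : Fin n → ℕ) (j : Fin n) (a : ℕ) :
    pileMatrix K (update y j a) =
      (pileMatrix K y).updateCol j fun i ↦ symbolCoeff K a ((i : ℤ) - j) := by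
  ext1 p q
  rcases eq_or_ne q j with rfl | hq <;> simp [pileMatrix, *]

lemma coeff_zero_det_pileMatrix (y : Fin n → ℕ) : (pileMatrix K y).det.coeff 0 = 1 := by
  rw [← constantCoeff_apply, RingHom.map_det, Matrix.det_of_isLowerTriangular]
  · simp [pileMatrix, coeff_symbolCoeff, intChoose_zero_right]
  · intro i j hij
    have hij : i < j := hij
    simp [pileMatrix, coeff_symbolCoeff, intChoose_of_neg _ (show (i : ℤ) - j < 0 by omega)]

/-- The determinant of `pileMatrix K y` with column `j` replaced by the derivative of the column of
a pile with top `a`. Its differences in `a` are the determinants obtained by dealing `a` onto pile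
`j`. -/
noncomputable def shiftedColumnDet (y : Fin n → ℕ) (j : Fin n) (a : ℕ) : K[X] :=
  ((pileMatrix K y).updateCol j fun i ↦ symbolCoeff K a ((i : ℤ) - j + 1)).det

lemma shiftedColumnDet_succ_sub (y : Fin n → ℕ) (j : Fin n) (a : ℕ) :
    shiftedColumnDet K y j (a + 1) - shiftedColumnDet K y j a =
      (pileMatrix K (update y j a)).det := by
  have column_eq : (fun i : Fin n ↦ symbolCoeff K (a + 1) ((i : ℤ) - j + 1)) =
      (fun i : Fin n ↦ symbolCoeff K a ((i : ℤ) - j)) + fun i : Fin n ↦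
        symbolCoeff K a ((i : ℤ) - j + 1) :=
    funext fun i ↦ symbolCoeff_succ_succ K a _
  rw [shiftedColumnDet, column_eq, Matrix.det_updateCol_add, pileMatrix_update, shiftedColumnDet,
    add_sub_cancel_right]

lemma shiftedColumnDet_sup_Iio {y : Fin n → ℕ} (hy : Monotone y) (j : Fin n) :
    shiftedColumnDet K y j ((Iio j).sup y) = 0 := by
  cases n with
  | zero => exact j.elim0
  | succ n =>
    cases j using Fin.cases with
    | zero =>
      refine Matrix.det_eq_zero_of_column_eq_zero 0 fun i ↦ ?_
      have sup_eq : (Iio (0 : Fin (n + 1))).sup y = 0 := by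
        simp [show Iio (0 : Fin (n + 1)) = ∅ from Iio_bot]
      rw [Matrix.updateCol_self, sup_eq, symbolCoeff_zero_of_pos]
      simp
    | succ p =>
      have hne : p.castSucc ≠ p.succ := p.castSucc_lt_succ.ne
      refine Matrix.det_zero_of_column_eq hne fun i ↦ ?_
      rw [Matrix.updateCol_self, Matrix.updateCol_ne hne, sup_Iio_succ hy]
      simp [pileMatrix, sub_add_eq_sub_sub]

lemma derivative_det_pileMatrix [CharZero K] {y : Fin n → ℕ} (hy : Monotone y) :
    derivative (pileMatrix K y).det =
      ∑ j, ∑ a ∈ Ico ((Iio j).sup y) (y j), (pileMatrix K (update y j a)).det := by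
  rw [derivative_det]
  refine sum_congr rfl fun j _ ↦ ?_
  have hle : (Iio j).sup y ≤ y j := Finset.sup_le fun i hi ↦ hy (mem_Iio.1 hi).le
  calc ((pileMatrix K y).updateCol j fun i ↦ derivative (pileMatrix K y i j)).det
    _ = shiftedColumnDet K y j (y j) - shiftedColumnDet K y j ((Iio j).sup y) := by
      rw [shiftedColumnDet_sup_Iio K hy, sub_zero]
      simp only [shiftedColumnDet, pileMatrix, Matrix.of_apply, derivative_symbolCoeff]
    _ = _ := by
      simp only [← shiftedColumnDet_succ_sub]
      rw [sum_Ico_eq_sub _ hle, sum_range_sub, sum_range_sub, sub_sub_sub_cancel_right]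

end PileMatrix

lemma coeff_det_pileMatrix (K : Type*) [Field K] [CharZero K] {k n : ℕ} (N : ℕ) {y : Fin n → ℕ}
    (hy : Monotone y) (hk : ∀ j, y j ≤ k) :
    (pileMatrix K y).det.coeff N = (fittingWordCount k N y : K) / N ! := by
  induction N generalizing y with
  | zero => simp [coeff_zero_det_pileMatrix, fittingWordCount_zero]
  | succ N ih =>
    have coeff_succ_mul : (pileMatrix K y).det.coeff (N + 1) * (N + 1) =
        (fittingWordCount k (N + 1) y : K) / N ! := by
      rw [← coeff_derivative, derivative_det_pileMatrix K hy, fittingWordCount_succ N hy hk]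
      simp only [finsetSum_coeff, Nat.cast_sum, sum_div]
      refine sum_congr rfl fun j _ ↦ sum_congr rfl fun a ha ↦ ih ?_ ?_
      · exact update_monotone_of_isLeast hy (isLeast_setOf_lt_iff_mem_Ico.2 ha)
      · exact update_le_iff.2 ⟨(mem_Ico.1 ha).2.le.trans (hk j), fun i _ ↦ hk i⟩
    rw [← eq_div_iff (by exact_mod_cast N.succ_ne_zero)] at coeff_succ_mul
    rw [coeff_succ_mul, div_div, mul_comm, Nat.factorial_succ]
    push_cast
    rfl

lemma eval_det_pileMatrix_const (n k : ℕ) (t : ℝ) :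
    (pileMatrix ℝ fun _ : Fin n ↦ k).det.eval t =
      (Matrix.of fun i j : Fin n ↦ aCoeff k ((i : ℤ) - j) t).det := by
  rw [← coe_evalRingHom, RingHom.map_det]
  congr 1
  ext1 i j
  simp [pileMatrix, eval_symbolCoeff]

lemma FI_mul_pow_div_factorial {k : ℕ} (hk : k ≠ 0) (n N : ℕ) (t : ℝ) :
    FI n k N * (k * t) ^ N / N ! = (pileMatrix ℝ fun _ : Fin n ↦ k).det.coeff N * t ^ N := by
  rw [FI, card_incLen_le_eq_fittingWordCount,
    coeff_det_pileMatrix ℝ N monotone_const fun _ ↦ le_rfl, mul_pow]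
  field_simp

/-- Theorem 1 ($G_I$ case): the exponential generating function of `F_I(n;k,·)`,
evaluated at `k t`, equals the `n × n` Toeplitz determinant with symbol
`f_I(z;t) = e^{t/z} (1+z)^k`. -/
theorem gessel_weakly_increasing (k n : ℕ) (hk : 1 ≤ k) (hn : 1 ≤ n) (t : ℝ) :
    ∑' N : ℕ, FI n k N * ((k : ℝ) * t) ^ N / (Nat.factorial N : ℝ) =
      Matrix.det (Matrix.of fun i j : Fin n =>
        aCoeff k (((i : ℕ) : ℤ) - ((j : ℕ) : ℤ)) t) := by
  let D : ℝ[X] := (pileMatrix ℝ fun _ : Fin n ↦ k).det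
  calc ∑' N : ℕ, FI n k N * (k * t) ^ N / (N ! : ℝ)
    _ = ∑' N : ℕ, D.coeff N * t ^ N :=
      tsum_congr fun N ↦ FI_mul_pow_div_factorial (Nat.one_le_iff_ne_zero.1 hk) n N t
    _ = ∑ N ∈ range (D.natDegree + 1), D.coeff N * t ^ N :=
      tsum_eq_sum fun N hN ↦ by
        rw [coeff_eq_zero_of_natDegree_lt (by simpa using hN), zero_mul]
    _ = D.eval t := (eval_eq_sum_range t).symm
    _ = _ := eval_det_pileMatrix_const n k t
end

section
/- For all integers k ≥ 1, n ≥ 1 and every real t, the exponential generating function of the distribution of the longest strictly decreasing subsequence satisfies ∑_{N=0}^∞ F_D(n;k,N)·(k t)^N / N! = det( (b_{i−j}(t))_{1≤i,j≤n} ), i.e. G_D(n;k,kt) equals the n×n Toeplitz determinant with symbol f_D(z;t) = e^{t/z}(1−z)^{−k}. -/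
open scoped BigOperators

/-- The length of the longest strictly decreasing subsequence of the word `w`. -/
noncomputable def decLen {N k : ℕ} (w : Fin N → Fin k) : ℕ :=
  sSup {m | ∃ f : Fin m → Fin N, StrictMono f ∧ StrictAnti (w ∘ f)}

/-- `F_D(n;k,N)`: the probability that a uniform random word of length `N` on `k`
letters has longest strictly decreasing subsequence of length at most `n`. -/
noncomputable def FD (n k N : ℕ) : ℝ :=
  (Nat.card {w : Fin N → Fin k // decLen w ≤ n} : ℝ) / (k : ℝ) ^ N

/-- The Fourier coefficients `b_j(t)` of the symbol `f_D(z;t) = e^{t/z} (1-z)^{-k}`. -/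
noncomputable def bCoeff (k : ℕ) (j : ℤ) (t : ℝ) : ℝ :=
  ∑' ℓ : ℕ, t ^ ℓ / (Nat.factorial ℓ : ℝ) *
    (if 0 ≤ j + (ℓ : ℤ) then
      (Nat.choose (k + (j + (ℓ : ℤ)).toNat - 1) (j + (ℓ : ℤ)).toNat : ℝ) else 0)

/-!
Read a word letter by letter and let `Y p` be the largest last letter of a strictly decreasing
subsequence of length `p` of the part already read, with `Y 0 = k`, and `Y p = 0` if there is no
such subsequence. The next letter `x` is forbidden if `x < Y n`; otherwise it falls into exactly
one interval `Y (j + 1) ≤ x < Y j` with `j < n`, and replaces `Y (j + 1)`.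

To the state `Y` attach the determinant whose column `j` is taken from the Fourier coefficients of
`e^{t/z} (1 - z)^{-(k - Y (j + 1))}` instead of `e^{t/z} (1 - z)^{-k}`. Differentiation in `t`
multiplies a symbol by `1/z` and so shifts a column by one. Since `f_m = (1 - z) f_{m + 1}` for
`f_m = e^{t/z} (1 - z)^{-m}`, the shifted column telescopes into a sum over the letters of
`[Y (j + 1), Y j)`, up to a column which is either zero or a copy of column `j - 1`. Hence the
derivative of the determinant is the sum of the determinants of the states reachable by one
letter, and `N! [t^N] det` obeys the same recursion as the number of words of length `N`.
-/

namespace Gessel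

open PowerSeries

section Derivation

variable {R A ι : Type*} [DecidableEq ι]

theorem derivation_prod {M : Type*} [CommSemiring R] [CommSemiring A] [AddCommMonoid M]
    [Algebra R A] [Module A M] [Module R M] (D : Derivation R A M) (s : Finset ι) (f : ι → A) :
    D (∏ i ∈ s, f i) = ∑ i ∈ s, (∏ l ∈ s.erase i, f l) • D (f i) := by
  induction s using Finset.induction_on with
  | empty => simp
  | insert a s ha ih =>
    rw [Finset.prod_insert ha, D.leibniz, ih, Finset.sum_insert ha, Finset.erase_insert ha,
      Finset.smul_sum, add_comm]
    congr 1
    refine Finset.sum_congr rfl fun i hi => ?_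
    have hai : a ≠ i := fun h => ha (h ▸ hi)
    rw [Finset.erase_insert_of_ne hai, Finset.prod_insert (by simp [ha]), mul_smul]

theorem derivation_det [Fintype ι] [CommSemiring R] [CommRing A] [Algebra R A]
    (D : Derivation R A A) (M : Matrix ι ι A) :
    D M.det = ∑ j, M.cramer (fun i => D (M i j)) j := by
  simp only [Matrix.cramer_apply, Matrix.det_apply]
  rw [map_sum, Finset.sum_comm]
  refine Finset.sum_congr rfl fun σ _ => ?_
  rw [← Finset.smul_sum, Units.smul_def, Units.smul_def, map_zsmul, derivation_prod]
  congr 1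
  refine Finset.sum_congr rfl fun j _ => ?_
  rw [← Finset.mul_prod_erase _ _ (Finset.mem_univ j), Matrix.updateCol_self, smul_eq_mul,
    mul_comm]
  congr 1
  refine Finset.prod_congr rfl fun i hi => ?_
  rw [Matrix.updateCol_ne (Finset.ne_of_mem_erase hi)]

end Derivation

section Symbol

/-- The coefficient of `z ^ r` in the expansion of `(1 - z) ^ (-m)`, for any integer `r`. -/
def negPowCoeff (m : ℕ) : ℤ → ℕ
  | .ofNat r => m.multichoose r
  | .negSucc _ => 0

theorem negPowCoeff_zero_right (m : ℕ) : negPowCoeff m 0 = 1 :=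
  m.multichoose_zero_right

theorem negPowCoeff_of_neg (m : ℕ) {r : ℤ} (hr : r < 0) : negPowCoeff m r = 0 := by
  obtain ⟨s, rfl⟩ := Int.eq_negSucc_of_lt_zero hr
  rfl

theorem negPowCoeff_zero_left_of_pos {r : ℤ} (hr : 0 < r) : negPowCoeff 0 r = 0 := by
  obtain ⟨s, rfl⟩ := Int.eq_succ_of_zero_lt hr
  exact Nat.multichoose_zero_succ s

theorem negPowCoeff_succ_succ (m : ℕ) :
    ∀ r : ℤ, negPowCoeff (m + 1) (r + 1) = negPowCoeff m (r + 1) + negPowCoeff (m + 1) r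
  | .ofNat r => Nat.multichoose_succ_succ m r
  | .negSucc 0 => by simp [negPowCoeff_zero_right, negPowCoeff_of_neg]
  | .negSucc (r + 1) => rfl

theorem negPowCoeff_eq_ite (m : ℕ) (r : ℤ) :
    negPowCoeff m r = if 0 ≤ r then (m + r.toNat - 1).choose r.toNat else 0 := by
  cases r with
  | ofNat r => simp [negPowCoeff, Nat.multichoose_eq]
  | negSucc r => simp [negPowCoeff]

theorem negPowCoeff_le_two_pow (m : ℕ) (r : ℤ) : negPowCoeff m r ≤ 2 ^ (m + r.natAbs) := by
  rw [negPowCoeff_eq_ite]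
  split_ifs
  · exact (Nat.choose_le_two_pow _ _).trans (Nat.pow_le_pow_right two_pos (by lia))
  · exact Nat.zero_le _

variable (K : Type*) [Field K]

/-- The `j`-th Fourier coefficient in `z` of the symbol `e^{t/z} (1 - z)^{-m}`, as a formal power
series in `t`. -/
def symbolSeries (m : ℕ) (j : ℤ) : K⟦X⟧ :=
  PowerSeries.mk fun l => (negPowCoeff m (j + l) : K) / (l.factorial : K)

theorem constantCoeff_symbolSeries (m : ℕ) (j : ℤ) :
    constantCoeff (symbolSeries K m j) = negPowCoeff m j := by
  simp [← coeff_zero_eq_constantCoeff_apply, symbolSeries]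

theorem derivative_symbolSeries [CharZero K] (m : ℕ) (j : ℤ) :
    derivative K (symbolSeries K m j) = symbolSeries K m (j + 1) := by
  ext l
  have hl : (l.factorial : K) ≠ 0 := Nat.cast_ne_zero.mpr l.factorial_ne_zero
  have hl' : (l : K) + 1 ≠ 0 := Nat.cast_add_one_ne_zero l
  simp only [coeff_derivative, symbolSeries, coeff_mk, Nat.factorial_succ, Nat.cast_mul,
    Nat.cast_succ, add_assoc, add_comm (1 : ℤ)]
  field_simp

theorem symbolSeries_succ_succ (m : ℕ) (j : ℤ) :
    symbolSeries K (m + 1) (j + 1) = symbolSeries K m (j + 1) + symbolSeries K (m + 1) j := by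
  ext l
  simp only [symbolSeries, coeff_mk, map_add, add_right_comm j 1, negPowCoeff_succ_succ,
    Nat.cast_add, add_div]

theorem symbolSeries_zero_left_of_pos {j : ℤ} (hj : 0 < j) : symbolSeries K 0 j = 0 := by
  ext l
  simp [symbolSeries, negPowCoeff_zero_left_of_pos (show 0 < j + (l : ℤ) by lia)]

theorem sum_Ico_symbolSeries_sub {a b k : ℕ} (hab : a ≤ b) (hbk : b ≤ k) (j : ℤ) :
    ∑ x ∈ Finset.Ico a b, symbolSeries K (k - x) j =
      symbolSeries K (k - a) (j + 1) - symbolSeries K (k - b) (j + 1) := by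
  induction b, hab using Nat.le_induction with
  | base => simp
  | succ b hab ih =>
    have hkb : k - b = k - (b + 1) + 1 := by lia
    rw [Finset.sum_Ico_succ_top hab, ih (by lia), hkb, symbolSeries_succ_succ]
    ring

end Symbol

section ThresholdMatrix

variable {n : ℕ} {Y : ℕ → ℕ}

theorem antitone_update (hY : Antitone Y) {j x : ℕ} (hjx : Y (j + 1) ≤ x) (hxj : x < Y j) :
    Antitone (Function.update Y (j + 1) x) := by
  refine antitone_nat_of_succ_le fun p => ?_
  have hp : Y (p + 1) ≤ Y p := hY p.le_succ
  grind [Function.update_apply]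

variable (K : Type*) [Field K]

/-- The Toeplitz matrix of the symbol `e^{t/z} (1 - z)^{-k}`, `k = Y 0`, with the exponent of
column `j` lowered by the threshold `Y (j + 1)`. -/
def thresholdMatrix (n : ℕ) (Y : ℕ → ℕ) : Matrix (Fin n) (Fin n) K⟦X⟧ :=
  Matrix.of fun i j => symbolSeries K (Y 0 - Y (j + 1)) (i - j)

theorem det_thresholdMatrix_update (Y : ℕ → ℕ) (j : Fin n) (x : ℕ) :
    (thresholdMatrix K n (Function.update Y (j + 1) x)).det =
      (thresholdMatrix K n Y).cramer (fun i => symbolSeries K (Y 0 - x) (i - j)) j := by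
  rw [Matrix.cramer_apply]
  congr 1
  ext1 i l
  rcases eq_or_ne l j with rfl | hlj
  · simp [thresholdMatrix]
  · simp [thresholdMatrix, hlj, Fin.val_ne_of_ne hlj]

theorem cramer_thresholdMatrix_eq_zero (j : Fin n) :
    (thresholdMatrix K n Y).cramer (fun i => symbolSeries K (Y 0 - Y j) (i - j + 1)) j = 0 := by
  rw [Matrix.cramer_apply]
  rcases Nat.eq_zero_or_pos (j : ℕ) with hj | hj
  · refine Matrix.det_eq_zero_of_column_eq_zero j fun i => ?_
    rw [Matrix.updateCol_self, hj, Nat.sub_self]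
    exact symbolSeries_zero_left_of_pos K (by lia)
  · obtain ⟨p, hp⟩ : ∃ p : Fin n, (j : ℕ) = p + 1 := ⟨⟨j - 1, by lia⟩, by simp; lia⟩
    have hpj : p ≠ j := by grind
    refine Matrix.det_zero_of_column_eq hpj fun i => ?_
    have hij : (i : ℤ) - j + 1 = i - p := by lia
    rw [Matrix.updateCol_self, Matrix.updateCol_ne hpj, thresholdMatrix, Matrix.of_apply, hij, hp]

theorem sum_det_thresholdMatrix_update [CharZero K] (hY : Antitone Y) (j : Fin n) :
    ∑ x ∈ Finset.Ico (Y (j + 1)) (Y j),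
        (thresholdMatrix K n (Function.update Y (j + 1) x)).det =
      (thresholdMatrix K n Y).cramer (fun i => derivative K (thresholdMatrix K n Y i j)) j := by
  have telescope :
      ∑ x ∈ Finset.Ico (Y (j + 1)) (Y j), (fun i : Fin n => symbolSeries K (Y 0 - x) (i - j)) =
        (fun i => derivative K (thresholdMatrix K n Y i j)) -
          fun i : Fin n => symbolSeries K (Y 0 - Y j) (i - j + 1) := by
    ext1 i
    rw [Finset.sum_apply, Pi.sub_apply, thresholdMatrix, Matrix.of_apply, derivative_symbolSeries,
      sum_Ico_symbolSeries_sub K (hY (Nat.le_succ j)) (hY (Nat.zero_le j))]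
  simp only [det_thresholdMatrix_update]
  rw [← Finset.sum_apply, ← map_sum, telescope, map_sub, Pi.sub_apply,
    cramer_thresholdMatrix_eq_zero, sub_zero]

theorem derivative_det_thresholdMatrix [CharZero K] (hY : Antitone Y) :
    derivative K (thresholdMatrix K n Y).det =
      ∑ j : Fin n, ∑ x ∈ Finset.Ico (Y (j + 1)) (Y j),
        (thresholdMatrix K n (Function.update Y (j + 1) x)).det := by
  rw [derivation_det]
  exact Finset.sum_congr rfl fun j _ => (sum_det_thresholdMatrix_update K hY j).symm

theorem constantCoeff_det_thresholdMatrix (n : ℕ) (Y : ℕ → ℕ) :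
    constantCoeff (thresholdMatrix K n Y).det = 1 := by
  rw [RingHom.map_det, Matrix.det_of_isLowerTriangular]
  · simp [thresholdMatrix, constantCoeff_symbolSeries, negPowCoeff_zero_right]
  · intro i j (hij : i < j)
    have hneg : (i : ℤ) - j < 0 := sub_neg.mpr (Int.ofNat_lt.mpr hij)
    simp [thresholdMatrix, constantCoeff_symbolSeries, negPowCoeff_of_neg _ hneg]

end ThresholdMatrix

section Admissible

variable {n : ℕ} {Y : ℕ → ℕ}

/-- Reading the word `w` from the state `Y` never completes a strictly decreasing subsequence of
length `n + 1`: a decreasing subsequence of `w` with letters below the threshold `Y p` extends one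
of length `p` read before. -/
def Admissible (n : ℕ) (Y : ℕ → ℕ) (w : List ℕ) : Prop :=
  ∀ p ≤ n, ∀ s : List ℕ, s.Sublist w → s.Pairwise (· > ·) → (∀ a ∈ s, a < Y p) → s.length + p ≤ n

theorem admissible_nil (n : ℕ) (Y : ℕ → ℕ) : Admissible n Y [] := by
  intro p hp s hs _ _
  simpa [List.sublist_nil.mp hs] using hp

theorem not_admissible_cons {x : ℕ} (hx : x < Y n) (w : List ℕ) : ¬ Admissible n Y (x :: w) := by
  intro h
  simpa using h n le_rfl [x] (by simp) (by simp) (by simpa using hx)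

theorem Admissible.update_of_cons {j x : ℕ} {w : List ℕ} (h : Admissible n Y (x :: w))
    (hj : j < n) (hxj : x < Y j) : Admissible n (Function.update Y (j + 1) x) w := by
  intro p hp s hs hdec hlt
  rcases eq_or_ne p (j + 1) with rfl | hpj
  · simp only [Function.update_self] at hlt
    have hlen : (x :: s).length + j ≤ n :=
      h j hj.le (x :: s) (hs.cons_cons x) (List.pairwise_cons.mpr ⟨hlt, hdec⟩)
        (List.forall_mem_cons.mpr ⟨hxj, fun a ha => (hlt a ha).trans hxj⟩)
    rw [List.length_cons] at hlen
    lia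
  · rw [Function.update_of_ne hpj] at hlt
    exact h p hp s (hs.cons x) hdec hlt

theorem Admissible.cons_of_update (hY : Antitone Y) {j x : ℕ} {w : List ℕ}
    (h : Admissible n (Function.update Y (j + 1) x) w) (hj : j < n) (hjx : Y (j + 1) ≤ x) :
    Admissible n Y (x :: w) := by
  intro p hp s hs hdec hlt
  rcases List.sublist_cons_iff.mp hs with hs | ⟨r, rfl, hr⟩
  · have hle : Y p ≤ Function.update Y (j + 1) x p := by grind [Function.update_apply]
    exact h p hp s hs hdec fun a ha => (hlt a ha).trans_le hle
  · obtain ⟨hxr, hdec⟩ := List.pairwise_cons.mp hdec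
    have hpj : p ≤ j := by
      by_contra! hjp
      exact ((hlt x List.mem_cons_self).trans_le ((hY hjp).trans hjx)).false
    have hlen : r.length + (j + 1) ≤ n :=
      h (j + 1) hj r hr hdec fun a ha => by simpa using hxr a ha
    rw [List.length_cons]
    lia

theorem admissible_cons_iff (hY : Antitone Y) {j x : ℕ} {w : List ℕ} (hj : j < n)
    (hjx : Y (j + 1) ≤ x) (hxj : x < Y j) :
    Admissible n Y (x :: w) ↔ Admissible n (Function.update Y (j + 1) x) w :=
  ⟨fun h => h.update_of_cons hj hxj, fun h => h.cons_of_update hY hj hjx⟩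

/-- The number of words of length `N` on the letters `0, …, k - 1` that are admissible from the
state `Y`. -/
noncomputable def admissibleCount (n k N : ℕ) (Y : ℕ → ℕ) : ℕ :=
  Nat.card {w : Fin N → Fin k // Admissible n Y (List.ofFn fun i => (w i : ℕ))}

theorem admissibleCount_zero (n k : ℕ) (Y : ℕ → ℕ) : admissibleCount n k 0 Y = 1 := by
  simp [admissibleCount, admissible_nil]

theorem natCard_subtype_cons {α : Type*} [Fintype α] {N : ℕ} (P : (Fin (N + 1) → α) → Prop) :
    Nat.card {w // P w} = ∑ a, Nat.card {w : Fin N → α // P (Fin.cons a w)} := by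
  rw [← Nat.card_sigma]
  refine Nat.card_congr (Equiv.trans ?_ (Equiv.subtypeProdEquivSigmaSubtype _))
  exact ((Fin.consEquiv fun _ => α).subtypeEquiv fun _ => Iff.rfl).symm

theorem sum_range_eq_sum_range_add_sum_Ico {M : Type*} [AddCommMonoid M] (hY : Antitone Y)
    (F : ℕ → M) (n : ℕ) :
    ∑ x ∈ Finset.range (Y 0), F x = ∑ x ∈ Finset.range (Y n), F x +
      ∑ j ∈ Finset.range n, ∑ x ∈ Finset.Ico (Y (j + 1)) (Y j), F x := by
  induction n with
  | zero => simp
  | succ n ih =>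
    rw [ih, ← Finset.sum_range_add_sum_Ico F (hY n.le_succ), Finset.sum_range_succ, add_assoc,
      add_comm (∑ x ∈ Finset.Ico _ _, F x)]

theorem admissibleCount_succ (hY : Antitone Y) (n N : ℕ) :
    admissibleCount n (Y 0) (N + 1) Y =
      ∑ j : Fin n, ∑ x ∈ Finset.Ico (Y (j + 1)) (Y j),
        admissibleCount n (Y 0) N (Function.update Y (j + 1) x) := by
  let tailCount (x : ℕ) : ℕ :=
    Nat.card {w : Fin N → Fin (Y 0) // Admissible n Y (x :: List.ofFn fun i => (w i : ℕ))}
  have first_letter :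
      admissibleCount n (Y 0) (N + 1) Y = ∑ x ∈ Finset.range (Y 0), tailCount x := by
    rw [← Fin.sum_univ_eq_sum_range, admissibleCount, natCard_subtype_cons]
    simp only [List.ofFn_succ, Fin.cons_zero, Fin.cons_succ, tailCount]
  have forbidden : ∑ x ∈ Finset.range (Y n), tailCount x = 0 :=
    Finset.sum_eq_zero fun x hx => by
      simp [tailCount, not_admissible_cons (Finset.mem_range.mp hx)]
  rw [first_letter, sum_range_eq_sum_range_add_sum_Ico hY tailCount n, forbidden, zero_add,
    ← Fin.sum_univ_eq_sum_range fun j => ∑ x ∈ Finset.Ico (Y (j + 1)) (Y j), tailCount x]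
  refine Finset.sum_congr rfl fun j _ => Finset.sum_congr rfl fun x hx => ?_
  obtain ⟨hjx, hxj⟩ := Finset.mem_Ico.mp hx
  simp only [tailCount, admissibleCount, admissible_cons_iff hY j.isLt hjx hxj]

theorem coeff_det_thresholdMatrix_mul_factorial (K : Type*) [Field K] [CharZero K] (n N : ℕ)
    (hY : Antitone Y) :
    coeff N (thresholdMatrix K n Y).det * N.factorial = admissibleCount n (Y 0) N Y := by
  induction N generalizing Y with
  | zero =>
    simp [constantCoeff_det_thresholdMatrix, admissibleCount_zero]
  | succ N ih =>
    calc coeff (N + 1) (thresholdMatrix K n Y).det * (N + 1).factorial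
        = coeff N (derivative K (thresholdMatrix K n Y).det) * N.factorial := by
          rw [coeff_derivative, Nat.factorial_succ]
          push_cast
          ring
      _ = ∑ j : Fin n, ∑ x ∈ Finset.Ico (Y (j + 1)) (Y j),
            coeff N (thresholdMatrix K n (Function.update Y (j + 1) x)).det * N.factorial := by
          simp only [derivative_det_thresholdMatrix K hY, map_sum, Finset.sum_mul]
      _ = ∑ j : Fin n, ∑ x ∈ Finset.Ico (Y (j + 1)) (Y j),
            (admissibleCount n (Y 0) N (Function.update Y (j + 1) x) : K) := by
          refine Finset.sum_congr rfl fun j _ => Finset.sum_congr rfl fun x hx => ?_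
          obtain ⟨hjx, hxj⟩ := Finset.mem_Ico.mp hx
          simpa using ih (antitone_update hY hjx hxj)
      _ = admissibleCount n (Y 0) (N + 1) Y := by
          rw [admissibleCount_succ hY]
          push_cast
          rfl

end Admissible

section DecLen

theorem exists_strictMono_strictAnti_comp_iff {α : Type*} [Preorder α] {N m : ℕ} (w : Fin N → α) :
    (∃ f : Fin m → Fin N, StrictMono f ∧ StrictAnti (w ∘ f)) ↔
      ∃ s : List α, s.Sublist (List.ofFn w) ∧ s.Pairwise (· > ·) ∧ s.length = m := by
  constructor
  · rintro ⟨f, hf, hwf⟩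
    refine ⟨List.ofFn (w ∘ f), ?_, List.pairwise_ofFn.mpr fun _ _ h => hwf h, List.length_ofFn⟩
    refine List.sublist_iff_exists_fin_orderEmbedding_get_eq.mpr
      ⟨OrderEmbedding.ofStrictMono
        (fun i => (f (i.cast List.length_ofFn)).cast List.length_ofFn.symm) fun _ _ h => hf h,
        fun i => ?_⟩
    simp only [List.get_ofFn, Function.comp_apply]
    rfl
  · rintro ⟨s, hs, hdec, rfl⟩
    obtain ⟨f, hf⟩ := List.sublist_iff_exists_fin_orderEmbedding_get_eq.mp hs
    refine ⟨fun i => (f i).cast List.length_ofFn, fun _ _ h => f.strictMono h, fun i j hij => ?_⟩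
    change w _ < w _
    have hget : s.get i > s.get j := List.pairwise_iff_get.mp hdec i j hij
    simpa only [hf, List.get_ofFn] using hget

theorem decLen_le_iff {n k N : ℕ} (w : Fin N → Fin k) :
    decLen w ≤ n ↔ ∀ s : List ℕ, s.Sublist (List.ofFn fun i => (w i : ℕ)) →
      s.Pairwise (· > ·) → s.length ≤ n := by
  have lengths : {m | ∃ f : Fin m → Fin N, StrictMono f ∧ StrictAnti (w ∘ f)} =
      {m | ∃ s : List ℕ, s.Sublist (List.ofFn fun i => (w i : ℕ)) ∧
        s.Pairwise (· > ·) ∧ s.length = m} :=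
    Set.ext fun m => exists_strictMono_strictAnti_comp_iff (m := m) fun i => (w i : ℕ)
  have bounded : BddAbove {m | ∃ s : List ℕ, s.Sublist (List.ofFn fun i => (w i : ℕ)) ∧
      s.Pairwise (· > ·) ∧ s.length = m} := by
    refine ⟨N, ?_⟩
    rintro _ ⟨s, hs, -, rfl⟩
    simpa using hs.length_le
  rw [decLen, lengths]
  refine ⟨fun h s hs hdec => (le_csSup bounded ⟨s, hs, hdec, rfl⟩).trans h, fun h => csSup_le' ?_⟩
  rintro _ ⟨s, hs, hdec, rfl⟩
  exact h s hs hdec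

theorem antitone_single_zero (k : ℕ) : Antitone (Pi.single 0 k : ℕ → ℕ) :=
  antitone_nat_of_succ_le fun p => by simp

theorem decLen_le_iff_admissible {n k N : ℕ} (w : Fin N → Fin k) :
    decLen w ≤ n ↔ Admissible n (Pi.single 0 k) (List.ofFn fun i => (w i : ℕ)) := by
  rw [decLen_le_iff]
  constructor
  · intro h p hp s hs hdec hlt
    cases p with
    | zero => exact h s hs hdec
    | succ p =>
      have hnil : s = [] := List.eq_nil_iff_forall_not_mem.mpr fun a ha => by simpa using hlt a ha
      simpa [hnil] using hp
  · intro h s hs hdec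
    refine h 0 n.zero_le s hs hdec fun a ha => ?_
    obtain ⟨i, rfl⟩ := List.mem_ofFn.mp (hs.subset ha)
    simp

theorem natCard_decLen_le (n k N : ℕ) :
    Nat.card {w : Fin N → Fin k // decLen w ≤ n} = admissibleCount n k N (Pi.single 0 k) := by
  simp only [decLen_le_iff_admissible, admissibleCount]

end DecLen

section Evaluation

variable {R : Type*}

theorem coeff_mul_mul_pow [CommSemiring R] (φ ψ : R⟦X⟧) (t : R) (N : ℕ) :
    coeff N (φ * ψ) * t ^ N = ∑ p ∈ Finset.HasAntidiagonal.antidiagonal N,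
      (coeff p.1 φ * t ^ p.1) * (coeff p.2 ψ * t ^ p.2) := by
  rw [coeff_mul, Finset.sum_mul]
  refine Finset.sum_congr rfl fun p hp => ?_
  rw [← Finset.HasAntidiagonal.mem_antidiagonal.mp hp, pow_add]
  ring

theorem coeff_algebraMap_mul_pow [CommSemiring R] (c t : R) (N : ℕ) :
    coeff N (algebraMap R R⟦X⟧ c) * t ^ N = if N = 0 then c else 0 := by
  split_ifs with hN <;> simp [algebraMap_eq, coeff_C, hN]

/-- The algebra of formal power series that converge absolutely at `t`. -/
def absSummableAt [NormedCommRing R] (t : R) : Subalgebra R R⟦X⟧ where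
  carrier := {φ | Summable fun N => ‖coeff N φ * t ^ N‖}
  mul_mem' {φ ψ} hφ hψ := by
    simpa only [Set.mem_ofPred_eq, coeff_mul_mul_pow] using
      summable_norm_sum_mul_antidiagonal_of_summable_norm hφ hψ
  add_mem' {φ ψ} hφ hψ := by
    refine Summable.of_nonneg_of_le (fun _ => norm_nonneg _) (fun N => ?_) (hφ.add hψ)
    rw [map_add, add_mul]
    exact norm_add_le _ _
  algebraMap_mem' c := by
    refine summable_of_ne_finset_zero (s := {0}) fun N hN => ?_
    rw [coeff_algebraMap_mul_pow, if_neg (Finset.notMem_singleton.mp hN), norm_zero]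

variable [NormedCommRing R] [CompleteSpace R]

/-- Evaluation at `t` of the formal power series that converge absolutely there. -/
noncomputable def evalAt (t : R) : absSummableAt t →ₐ[R] R :=
  AlgHom.ofLinearMap
    { toFun := fun φ => ∑' N, coeff N (φ : R⟦X⟧) * t ^ N
      map_add' := fun φ ψ => by
        simp only [Subalgebra.coe_add, map_add, add_mul]
        exact φ.2.of_norm.tsum_add ψ.2.of_norm
      map_smul' := fun c φ => by
        simp only [Subalgebra.coe_smul, map_smul, smul_eq_mul, mul_assoc, RingHom.id_apply]
        exact φ.2.of_norm.tsum_mul_left c }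
    (by simp [coeff_one])
    (fun φ ψ => by
      simp only [LinearMap.coe_mk, AddHom.coe_mk, Subalgebra.coe_mul, coeff_mul_mul_pow]
      exact (tsum_mul_tsum_eq_tsum_sum_antidiagonal_of_summable_norm φ.2 ψ.2).symm)

theorem tsum_coeff_det_mul_pow {ι : Type*} [Fintype ι] [DecidableEq ι] {t : R}
    {M : Matrix ι ι R⟦X⟧} (hM : ∀ i j, M i j ∈ absSummableAt t) :
    ∑' N, coeff N M.det * t ^ N = (Matrix.of fun i j => ∑' N, coeff N (M i j) * t ^ N).det := by
  let M' : Matrix ι ι (absSummableAt t) := Matrix.of fun i j => ⟨M i j, hM i j⟩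
  have hdet : (M'.det : R⟦X⟧) = M.det := (absSummableAt t).val.map_det M'
  rw [← hdet]
  exact (evalAt t).map_det M'

theorem symbolSeries_mem_absSummableAt (m : ℕ) (j : ℤ) (t : ℝ) :
    symbolSeries ℝ m j ∈ absSummableAt t := by
  have hexp : Summable fun l : ℕ => 2 ^ (m + j.natAbs) * ((2 * |t|) ^ l / (l.factorial : ℝ)) :=
    (Real.summable_pow_div_factorial _).mul_left _
  refine Summable.of_nonneg_of_le (fun _ => norm_nonneg _) (fun l => ?_) hexp
  have hcoeff : (negPowCoeff m (j + l) : ℝ) ≤ 2 ^ (m + j.natAbs + l) := by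
    exact_mod_cast (negPowCoeff_le_two_pow m (j + l)).trans
      (Nat.pow_le_pow_right two_pos (by lia))
  calc ‖coeff l (symbolSeries ℝ m j) * t ^ l‖
      = negPowCoeff m (j + l) / l.factorial * |t| ^ l := by simp [symbolSeries]
    _ ≤ 2 ^ (m + j.natAbs + l) / l.factorial * |t| ^ l := by gcongr
    _ = 2 ^ (m + j.natAbs) * ((2 * |t|) ^ l / l.factorial) := by ring

theorem tsum_coeff_symbolSeries_mul_pow (k : ℕ) (j : ℤ) (t : ℝ) :
    ∑' l, coeff l (symbolSeries ℝ k j) * t ^ l = bCoeff k j t := by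
  refine tsum_congr fun l => ?_
  rw [symbolSeries, coeff_mk, negPowCoeff_eq_ite]
  push_cast
  ring

end Evaluation

theorem FD_mul_pow_div_factorial {k : ℕ} (hk : k ≠ 0) (n N : ℕ) (t : ℝ) :
    FD n k N * (k * t) ^ N / N.factorial =
      coeff N (thresholdMatrix ℝ n (Pi.single 0 k)).det * t ^ N := by
  have hcount := coeff_det_thresholdMatrix_mul_factorial ℝ n N (antitone_single_zero k)
  rw [Pi.single_eq_same] at hcount
  rw [FD, natCard_decLen_le, ← hcount, mul_pow]
  field_simp

end Gessel

/-- Theorem 1 ($G_D$ case): the exponential generating function of `F_D(n;k,·)`,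
evaluated at `k t`, equals the `n × n` Toeplitz determinant with symbol
`f_D(z;t) = e^{t/z} (1-z)^{-k}`. -/
theorem gessel_strictly_decreasing (k n : ℕ) (hk : 1 ≤ k) (hn : 1 ≤ n) (t : ℝ) :
    ∑' N : ℕ, FD n k N * ((k : ℝ) * t) ^ N / (Nat.factorial N : ℝ) =
      Matrix.det (Matrix.of fun i j : Fin n =>
        bCoeff k (((i : ℕ) : ℤ) - ((j : ℕ) : ℤ)) t) := by
  have hentry (i j : Fin n) : Gessel.thresholdMatrix ℝ n (Pi.single 0 k) i j =
      Gessel.symbolSeries ℝ k (i - j) := by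
    simp [Gessel.thresholdMatrix]
  calc ∑' N : ℕ, FD n k N * ((k : ℝ) * t) ^ N / (Nat.factorial N : ℝ)
      = ∑' N : ℕ,
          PowerSeries.coeff N (Gessel.thresholdMatrix ℝ n (Pi.single 0 k)).det * t ^ N :=
        tsum_congr fun N => Gessel.FD_mul_pow_div_factorial (by lia) n N t
    _ = (Matrix.of fun i j => ∑' N : ℕ, PowerSeries.coeff N
          (Gessel.thresholdMatrix ℝ n (Pi.single 0 k) i j) * t ^ N).det :=
        Gessel.tsum_coeff_det_mul_pow fun i j => by
          rw [hentry]
          exact Gessel.symbolSeries_mem_absSummableAt k _ t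
    _ = Matrix.det (Matrix.of fun i j : Fin n =>
          bCoeff k (((i : ℕ) : ℤ) - ((j : ℕ) : ℤ)) t) := by
        simp only [hentry, Gessel.tsum_coeff_symbolSeries_mul_pow]
end
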